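/- arXiv:0905.2617 — 5 statements merged into one kernel-verified Lean document; each statement's English description precedes it below -/
import Mathlib

section
/- Let C > 0 and let ρ : ℝ → ℝ be a function which is positive and differentiable on [0,∞) and satisfies 0 ≤ ρ'(r) ≤ C·ρ(r)² for all r ≥ 0. Then there exists a constant c with 0 < c < 1 such that c·ρ(r + c/ρ(r)) ≤ ρ(r) for all r ≥ 0. -/
/-- Remark after Theorem 7.1: the differential inequality `0 ≤ ρ' ≤ C ρ²` on `[0,∞)`
is sufficient for the growth condition (7.2). -/
theorem ssp_remark_growth_condition (C : ℝ) (hC : 0 < C) (ρ : ℝ → ℝ)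
    (hpos : ∀ r, 0 ≤ r → 0 < ρ r)
    (hdiff : DifferentiableOn ℝ ρ (Set.Ici 0))
    (hderiv : ∀ r, 0 ≤ r →
      0 ≤ derivWithin ρ (Set.Ici 0) r ∧
        derivWithin ρ (Set.Ici 0) r ≤ C * (ρ r) ^ 2) :
    ∃ c : ℝ, 0 < c ∧ c < 1 ∧ ∀ r, 0 ≤ r → c * ρ (r + c / ρ r) ≤ ρ r := by
  have hC1 : 0 < 1 + C := by linarith
  refine ⟨1 / (1 + C), by positivity, by rw [div_lt_one hC1]; linarith, ?_⟩
  intro r hr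
  have hρ := hpos r hr
  have hs0 : r ≤ r + 1 / (1 + C) / ρ r := by
    have : 0 < 1 / (1 + C) / ρ r := by positivity
    linarith
  have hs : 0 < ρ (r + 1 / (1 + C) / ρ r) := hpos _ (hr.trans hs0)
  have hd : ∀ x ∈ interior (Set.Ici (0:ℝ)),
      HasDerivAt (fun y => (ρ y)⁻¹) (-(derivWithin ρ (Set.Ici 0) x) / ρ x ^ 2) x := by
    intro x hx
    rw [interior_Ici] at hx
    have hx0 : 0 < x := hx
    have h1 := (hdiff x hx0.le).hasDerivWithinAt.hasDerivAt (Ici_mem_nhds hx0)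
    exact h1.fun_inv (hpos x hx0.le).ne'
  have key := (convex_Ici (0:ℝ)).mul_sub_le_image_sub_of_le_deriv (f := fun y => (ρ y)⁻¹)
    (hdiff.continuousOn.inv₀ (fun x hx => (hpos x hx).ne'))
    (fun x hx => (hd x hx).differentiableAt.differentiableWithinAt) (C := -C)
    (fun x hx => by
      have hx0 : 0 ≤ x := interior_subset hx
      rw [(hd x hx).deriv, le_div_iff₀ (pow_pos (hpos x hx0) 2)]
      linarith [(hderiv x hx0).2])
    r hr _ (hr.trans hs0) hs0
  have h2 : 1 / (1 + C) * (ρ r)⁻¹ ≤ (ρ (r + 1 / (1 + C) / ρ r))⁻¹ := by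
    have e : -C * (r + 1 / (1 + C) / ρ r - r) + (ρ r)⁻¹ = 1 / (1 + C) * (ρ r)⁻¹ := by
      field_simp
      ring
    linarith
  generalize ρ (r + 1 / (1 + C) / ρ r) = t at *
  have h3 := mul_le_mul_of_nonneg_right h2 (mul_pos hρ hs).le
  have e1 : 1 / (1 + C) * (ρ r)⁻¹ * (ρ r * t) = 1 / (1 + C) * t := by field_simp
  have e2 : t⁻¹ * (ρ r * t) = ρ r := by field_simp
  rwa [e1, e2] at h3
end

section
/- Let C > 0 and let ρ : ℝ → ℝ be a function which is positive and differentiable on [0,∞) and satisfies 0 ≤ ρ'(r) ≤ C·ρ(r)² for all r ≥ 0. Then for every r ≥ 0 and every δ > 0 one has ρ(r + δ/ρ(r)) ≤ ρ(r)·exp( C·δ·ρ(r + δ/ρ(r)) / ρ(r) ). -/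
/-- Grönwall-type estimate from the Remark after Theorem 7.1:
if `0 ≤ ρ' ≤ C ρ²` on `[0,∞)`, then `ρ(r + δ/ρ(r)) ≤ ρ(r) · exp(C δ ρ(r + δ/ρ(r))/ρ(r))`. -/
theorem ssp_remark_gronwall (C : ℝ) (hC : 0 < C) (ρ : ℝ → ℝ)
    (hpos : ∀ r, 0 ≤ r → 0 < ρ r)
    (hdiff : DifferentiableOn ℝ ρ (Set.Ici 0))
    (hderiv : ∀ r, 0 ≤ r →
      0 ≤ derivWithin ρ (Set.Ici 0) r ∧
        derivWithin ρ (Set.Ici 0) r ≤ C * (ρ r) ^ 2) :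
    ∀ r, 0 ≤ r → ∀ δ, 0 < δ →
      ρ (r + δ / ρ r) ≤ ρ r * Real.exp (C * δ * ρ (r + δ / ρ r) / ρ r) := by
  have hd : ∀ x, 0 < x → HasDerivAt ρ (derivWithin ρ (Set.Ici 0) x) x := fun x hx =>
    ((hdiff x hx.le).hasDerivWithinAt).hasDerivAt (Ici_mem_nhds hx)
  have hmono : MonotoneOn ρ (Set.Ici 0) := by
    apply monotoneOn_of_deriv_nonneg (convex_Ici 0) hdiff.continuousOn
    · exact hdiff.mono interior_subset
    · intro x hx
      rw [interior_Ici] at hx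
      have hx' : 0 < x := hx
      rw [(hd x hx').deriv]
      exact (hderiv x hx'.le).1
  intro r hr δ hδ
  have hρ := hpos r hr
  have hq : 0 < δ / ρ r := div_pos hδ hρ
  set b := r + δ / ρ r with hb
  have hrb : r < b := by linarith
  have hρb := hpos b (by linarith)
  obtain ⟨c, hc, hceq⟩ := exists_hasDerivAt_eq_slope (fun x => Real.log (ρ x))
    (fun x => derivWithin ρ (Set.Ici 0) x / ρ x) hrb
    (by
      apply ContinuousOn.log
      · exact hdiff.continuousOn.mono (fun x hx => le_trans hr hx.1)
      · intro x hx
        exact (hpos x (le_trans hr hx.1)).ne')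
    (fun x hx => (hd x (lt_of_le_of_lt hr hx.1)).log
      (hpos x (le_trans hr hx.1.le)).ne')
  have hc0 : 0 ≤ c := le_trans hr hc.1.le
  have hρc := hpos c hc0
  have h1 : derivWithin ρ (Set.Ici 0) c / ρ c ≤ C * ρ c := by
    rw [div_le_iff₀ hρc]
    nlinarith [(hderiv c hc0).2]
  have h2 : ρ c ≤ ρ b := hmono hc0 (show (0:ℝ) ≤ b by linarith) hc.2.le
  have h3 : Real.log (ρ b) - Real.log (ρ r) ≤ C * ρ b * (δ / ρ r) := by
    have hbr : b - r = δ / ρ r := by rw [hb]; ring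
    have h4 : (Real.log (ρ b) - Real.log (ρ r)) / (b - r) ≤ C * ρ b := by
      rw [← hceq]
      exact h1.trans (mul_le_mul_of_nonneg_left h2 hC.le)
    rw [hbr, div_le_iff₀ hq] at h4
    exact h4
  have h5 : Real.log (ρ b) ≤ Real.log (ρ r) + C * δ * ρ b / ρ r := by
    have : C * ρ b * (δ / ρ r) = C * δ * ρ b / ρ r := by ring
    linarith
  calc ρ b = Real.exp (Real.log (ρ b)) := (Real.exp_log hρb).symm
    _ ≤ Real.exp (Real.log (ρ r) + C * δ * ρ b / ρ r) := Real.exp_le_exp.mpr h5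
    _ = _ := by rw [Real.exp_add, Real.exp_log hρ]
end

section
/- Let ρ : [0,∞) → (0,∞) be continuous, nondecreasing and unbounded, and let c ∈ (0,1) satisfy c·ρ(r + c/ρ(r)) ≤ ρ(r) for all r ≥ 0. Put b = c^{-2}, and for each integer j with ρ(0) < b^j set r_j = sup{ r ≥ 0 : ρ(r) ≤ b^j }. Then for every such integer k one has ρ(r_k) = b^k and r_k + c·b^{-k} < r_{k+1}. -/
/-- Properties of the level radii `r_k` in the proof of Theorem 7.1: with `b = c^{-2}` and
`r_j = sup{ r ≥ 0 : ρ(r) ≤ b^j }`, one has `ρ(r_k) = b^k` and `r_k + c·b^{-k} < r_{k+1}`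
whenever `ρ(0) < b^k`. -/
theorem level_radii_properties (ρ : ℝ → ℝ) (c : ℝ)
    (hcont : ContinuousOn ρ (Set.Ici 0))
    (hpos : ∀ r, 0 ≤ r → 0 < ρ r)
    (hmono : ∀ r s, 0 ≤ r → r ≤ s → ρ r ≤ ρ s)
    (hunb : ∀ M : ℝ, ∃ r, 0 ≤ r ∧ M < ρ r)
    (hc0 : 0 < c) (hc1 : c < 1)
    (hgrow : ∀ r, 0 ≤ r → c * ρ (r + c / ρ r) ≤ ρ r)
    (b : ℝ) (hb : b = (c ^ 2)⁻¹)
    (rlev : ℤ → ℝ)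
    (hrlev : ∀ j : ℤ, ρ 0 < b ^ j →
      rlev j = sSup {r : ℝ | 0 ≤ r ∧ ρ r ≤ b ^ j}) :
    ∀ k : ℤ, ρ 0 < b ^ k →
      ρ (rlev k) = b ^ k ∧ rlev k + c * b ^ (-k) < rlev (k + 1) := by
  have key : ∀ M : ℝ, ρ 0 < M → 0 ≤ sSup {r : ℝ | 0 ≤ r ∧ ρ r ≤ M} ∧
      ρ (sSup {r : ℝ | 0 ≤ r ∧ ρ r ≤ M}) = M := by
    intro M hM
    obtain ⟨R, hR0, hR⟩ := hunb M
    have hbdd : BddAbove {r : ℝ | 0 ≤ r ∧ ρ r ≤ M} := by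
      refine ⟨R, fun r hr => ?_⟩
      by_contra hlt
      have := hmono R r hR0 (le_of_lt (not_le.mp hlt))
      linarith [hr.2]
    have hclosed : IsClosed {r : ℝ | 0 ≤ r ∧ ρ r ≤ M} :=
      hcont.preimage_isClosed_of_isClosed isClosed_Ici (isClosed_Iic (a := M))
    have hmem := hclosed.csSup_mem ⟨0, le_refl 0, hM.le⟩ hbdd
    obtain ⟨s, hs, hsM⟩ := intermediate_value_Icc hR0
      (hcont.mono Set.Icc_subset_Ici_self) ⟨hM.le, hR.le⟩
    have hle : s ≤ sSup {r : ℝ | 0 ≤ r ∧ ρ r ≤ M} := le_csSup hbdd ⟨hs.1, hsM.le⟩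
    refine ⟨hmem.1, le_antisymm hmem.2 ?_⟩
    rw [← hsM] at hle ⊢
    exact hmono _ _ hs.1 hle
  intro k hk
  have hcb : c * (c * b) = 1 := by
    rw [hb]; field_simp
  have hb0 : 0 < b := by rw [hb]; positivity
  have hcb1 : 1 < c * b := by
    by_contra h
    nlinarith
  have hb1 : 1 < b := by nlinarith
  have hbk : 0 < b ^ k := zpow_pos hb0 k
  have hsucc : b ^ (k + 1) = b ^ k * b := zpow_add_one₀ hb0.ne' k
  have hk1 : ρ 0 < b ^ (k + 1) := by rw [hsucc]; nlinarith
  obtain ⟨h0, h1⟩ := key _ hk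
  obtain ⟨h2, h3⟩ := key _ hk1
  rw [← hrlev k hk] at h0 h1
  rw [← hrlev (k + 1) hk1] at h2 h3
  refine ⟨h1, ?_⟩
  by_contra hlt
  have h4 := hmono _ _ h2 (not_lt.mp hlt)
  have h5 := hgrow _ h0
  rw [h1, div_eq_mul_inv, ← zpow_neg] at h5
  rw [h3, hsucc] at h4
  have h6 := mul_le_mul_of_nonneg_left h4 hc0.le
  nlinarith
end

section
/- Let ρ : [0,∞) → (0,∞) be continuous and nondecreasing, let c ∈ (0,1) satisfy c·ρ(r + c/ρ(r)) ≤ ρ(r) for all r ≥ 0, and assume ∫₁^∞ dr/ρ(r) < ∞. Then there exist a constant C > 0 and a continuously differentiable nondecreasing function ρ̃ : [0,∞) → (0,∞) such that C^{-1} ≤ ρ̃(r)/ρ(r) ≤ C and 0 ≤ ρ̃'(r) ≤ C·ρ(r)² for all r ≥ 0. -/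
/-- The regularized-function construction (7.4) in the proof of Theorem 7.1:
from a positive continuous nondecreasing `ρ` satisfying the growth condition (7.2)
and `∫₁^∞ dr/ρ(r) < ∞`, one constructs a `C¹` nondecreasing `ρ̃` comparable to `ρ`
with `0 ≤ ρ̃' ≤ C ρ²`. -/
theorem regularized_function_construction (ρ : ℝ → ℝ) (c : ℝ)
    (hcont : ContinuousOn ρ (Set.Ici 0))
    (hpos : ∀ r, 0 ≤ r → 0 < ρ r)
    (hmono : ∀ r s, 0 ≤ r → r ≤ s → ρ r ≤ ρ s)
    (hc0 : 0 < c) (hc1 : c < 1)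
    (hgrow : ∀ r, 0 ≤ r → c * ρ (r + c / ρ r) ≤ ρ r)
    (hint : MeasureTheory.IntegrableOn (fun r => (ρ r)⁻¹) (Set.Ioi 1)) :
    ∃ C : ℝ, 0 < C ∧ ∃ ρt : ℝ → ℝ,
      (∀ r, 0 ≤ r → 0 < ρt r) ∧
      (∀ r, 0 ≤ r → DifferentiableAt ℝ ρt r) ∧
      ContinuousOn (deriv ρt) (Set.Ici 0) ∧
      (∀ r s, 0 ≤ r → r ≤ s → ρt r ≤ ρt s) ∧
      (∀ r, 0 ≤ r → C⁻¹ ≤ ρt r / ρ r ∧ ρt r / ρ r ≤ C ∧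
        0 ≤ deriv ρt r ∧ deriv ρt r ≤ C * (ρ r) ^ 2) := by
  obtain ⟨g, hg⟩ : ∃ g : ℝ → ℝ, g = fun r => ρ (max r 0) := ⟨_, rfl⟩
  have hgρ : ∀ r, 0 ≤ r → g r = ρ r := by
    intro r hr; simp [hg, max_eq_left hr]
  have gc : Continuous g := by
    rw [hg]
    exact hcont.comp_continuous (by fun_prop) (fun x => le_max_right x 0)
  have gpos : ∀ r, 0 < g r := by
    intro r; rw [hg]; exact hpos _ (le_max_right r 0)
  have gmono : Monotone g := by
    intro r s h; rw [hg]
    exact hmono _ _ (le_max_right r 0) (max_le_max_right 0 h)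
  obtain ⟨T, hT⟩ : ∃ T : ℝ → ℝ, T = fun r => ∫ x in (0:ℝ)..r, g x := ⟨_, rfl⟩
  have T0 : T 0 = 0 := by simp [hT]
  have Td : ∀ r, HasDerivAt T (g r) r := by
    intro r; rw [hT]
    exact gc.integral_hasStrictDerivAt 0 r |>.hasDerivAt
  have Tc : Continuous T := continuous_iff_continuousAt.2 fun r => (Td r).continuousAt
  obtain ⟨q, hq⟩ : ∃ q : ℝ → ℝ, q = fun x => Real.exp (T x) * g x ^ 2 := ⟨_, rfl⟩
  have qc : Continuous q := by rw [hq]; fun_prop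
  obtain ⟨I, hI⟩ : ∃ I : ℝ → ℝ, I = fun r => ∫ x in (0:ℝ)..r, q x := ⟨_, rfl⟩
  have I0 : I 0 = 0 := by simp [hI]
  have Id : ∀ r, HasDerivAt I (q r) r := by
    intro r; rw [hI]
    exact qc.integral_hasStrictDerivAt 0 r |>.hasDerivAt
  have Inn : ∀ r, 0 ≤ r → 0 ≤ I r := by
    intro r hr; rw [hI]
    apply intervalIntegral.integral_nonneg hr
    intro x _; rw [hq]; positivity
  obtain ⟨F, hF⟩ : ∃ F : ℝ → ℝ, F = fun r => Real.exp (-T r) * (g 0 + I r) := ⟨_, rfl⟩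
  have ee : ∀ x, Real.exp (-x) * Real.exp x = 1 := by
    intro x; rw [← Real.exp_add]; simp
  have Fd : ∀ r, HasDerivAt F (g r * (g r - F r)) r := by
    intro r
    have h := ((Td r).neg.exp).mul ((Id r).const_add (g 0))
    rw [hF]
    refine HasDerivAt.congr_deriv h ?_
    rw [hq]
    simp only [Pi.neg_apply]
    linear_combination ((g r)^2) * ee (T r)
  have Fpos : ∀ r, 0 ≤ r → 0 < F r := by
    intro r hr; rw [hF]
    have := Inn r hr
    have := gpos 0
    positivity
  have F0 : F 0 = g 0 := by simp [hF, T0, I0]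
  have Fle : ∀ r, 0 ≤ r → F r ≤ g r := by
    intro r hr
    have hd : ∀ s, HasDerivAt (fun s => Real.exp (T s) * (F s - g r))
        (Real.exp (T s) * g s * (g s - g r)) s := by
      intro s
      have h := ((Td s).exp).mul ((Fd s).sub_const (g r))
      refine HasDerivAt.congr_deriv h ?_
      ring
    have anti : AntitoneOn (fun s => Real.exp (T s) * (F s - g r)) (Set.Icc 0 r) := by
      apply antitoneOn_of_deriv_nonpos (convex_Icc 0 r)
      · exact fun s _ => (hd s).continuousAt.continuousWithinAt
      · exact fun s _ => (hd s).differentiableAt.differentiableWithinAt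
      · intro s hs
        rw [interior_Icc] at hs
        rw [(hd s).deriv]
        have := gmono hs.2.le
        have := gpos s
        apply mul_nonpos_of_nonneg_of_nonpos (by positivity) (by linarith)
    have h := anti (Set.left_mem_Icc.2 hr) (Set.right_mem_Icc.2 hr) hr
    simp only [T0, F0, Real.exp_zero, one_mul] at h
    have h2 := gmono hr
    by_contra hcon
    push Not at hcon
    have : 0 < Real.exp (T r) * (F r - g r) := mul_pos (Real.exp_pos _) (by linarith)
    linarith
  have Fmono : MonotoneOn F (Set.Ici 0) := by
    apply monotoneOn_of_deriv_nonneg (convex_Ici 0)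
    · exact fun s _ => (Fd s).continuousAt.continuousWithinAt
    · exact fun s _ => (Fd s).differentiableAt.differentiableWithinAt
    · intro s hs
      rw [interior_Ici] at hs
      rw [(Fd s).deriv]
      have := Fle s (le_of_lt hs)
      exact mul_nonneg (gpos s).le (by linarith)
  have ggrow : ∀ r, 0 ≤ r → c * g (r + c / g r) ≤ g r := by
    intro r hr
    have := div_pos hc0 (gpos r)
    rw [hgρ _ (by linarith), hgρ r hr]
    exact hgrow r hr
  have hc3 : c ^ 3 ≤ c := by nlinarith [mul_pos hc0 hc0, mul_pos hc0 (mul_pos hc0 hc0)]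
  have hc3p : 0 < c ^ 3 := by positivity
  have Flow : ∀ r, 0 ≤ r → c ^ 3 / 2 * g r ≤ F r := by
    intro r hr
    rcases le_total r (c / g 0) with h | h
    · have h1 := ggrow 0 le_rfl
      rw [zero_add] at h1
      have h2 := gmono h
      have h3 := Fmono Set.self_mem_Ici hr hr
      rw [F0] at h3
      have := gpos r
      nlinarith
    · obtain ⟨a, ha, hae⟩ : ∃ a ∈ Set.Icc 0 r, a + c / g a = r := by
        have hcn : ContinuousOn (fun a => a + c / g a) (Set.Icc 0 r) := by
          apply Continuous.continuousOn
          exact continuous_id.add (continuous_const.div gc fun x => (gpos x).ne')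
        have := intermediate_value_Icc hr hcn
        apply this
        constructor
        · simpa using h
        · have := div_pos hc0 (gpos r)
          linarith
      have hga := ggrow a ha.1
      rw [hae] at hga
      by_contra hcon
      push Not at hcon
      have hgr := gpos r
      have hgap := gpos a
      have hda : 0 < c / g a := div_pos hc0 hgap
      have har : a < r := by linarith
      obtain ⟨s, hs, hse⟩ := exists_hasDerivAt_eq_slope F (fun s => g s * (g s - F s)) har
        (fun s _ => (Fd s).continuousAt.continuousWithinAt) (fun s _ => Fd s)
      have hs0 : 0 ≤ s := ha.1.trans hs.1.le
      have h1 : F s ≤ F r := Fmono hs0 hr hs.2.le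
      have h2 : c * g r ≤ g s := hga.trans (gmono hs.1.le)
      have h3 : c / 2 * g r ≤ g s - F s := by nlinarith
      have h4 : (c * g r) * (c / 2 * g r) ≤ g s * (g s - F s) :=
        mul_le_mul h2 h3 (by positivity) (gpos s).le
      have h5 : r - a = c / g a := by linarith
      have h6 : F r - F a = g s * (g s - F s) * (c / g a) := by
        rw [hse, h5]; field_simp
      have h7 : c / g r ≤ c / g a := div_le_div_of_nonneg_left hc0.le hgap (gmono har.le)
      have h8 : (c * g r) * (c / 2 * g r) * (c / g r) ≤ g s * (g s - F s) * (c / g a) :=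
        mul_le_mul h4 h7 (by positivity) (le_trans (by positivity) h4)
      have h9 : (c * g r) * (c / 2 * g r) * (c / g r) = c ^ 3 / 2 * g r := by
        field_simp
      have := Fpos a ha.1
      linarith
  have hC1 : 1 ≤ 2 / c ^ 3 := by
    rw [le_div_iff₀ hc3p]; linarith
  refine ⟨2 / c ^ 3, by positivity, F, Fpos, fun r _ => (Fd r).differentiableAt, ?_,
    fun r s hr hrs => Fmono hr (hr.trans hrs) hrs, ?_⟩
  · have : deriv F = fun r => g r * (g r - F r) := funext fun r => (Fd r).deriv
    rw [this]
    have Fc : Continuous F := continuous_iff_continuousAt.2 fun r => (Fd r).continuousAt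
    fun_prop
  · intro r hr
    rw [← hgρ r hr, (Fd r).deriv]
    have hgr := gpos r
    have h1 := Fle r hr
    have h2 := Flow r hr
    have h3 := Fpos r hr
    refine ⟨?_, ?_, mul_nonneg hgr.le (by linarith), ?_⟩
    · rw [inv_div, le_div_iff₀ hgr]; exact h2
    · rw [div_le_iff₀ hgr]; nlinarith
    · nlinarith [mul_pos hgr h3, mul_pos hgr hgr]
end

section
/- Let λ₀ > 0, α > 0, C > 0, and let h : ℝ → [0,∞) be measurable with h(τ) = 0 for τ ≤ 0 and h(τ) ≤ C·e^{−α/τ} for 0 < τ < 1, and suppose that for every δ with 0 < δ < 1 there exists a constant C_δ ≥ 1 such that C_δ^{-1}·e^{−λ₀ τ} ≤ h(τ) ≤ C_δ·e^{−λ₀ τ} for all τ ≥ δ. Then there is no Borel measure ν on ℝ, supported in (−∞, 0), such that e^{−λ₀ t} = ∫_ℝ h(t − s) dν(s) for all t < 0. -/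
open MeasureTheory

/-- Analytic core of Lemma 6.3: a function `h` vanishing on `(−∞,0]`, dominated by
`C e^{−α/τ}` near `0` and two-sidedly comparable to `e^{−λ₀ τ}` away from `0`, cannot
represent `e^{−λ₀ t}` as `∫ h(t−s) dν(s)` for a Borel measure `ν` supported in
`(−∞,0)`. -/
theorem no_representing_measure_for_ground_state
    (lam0 α C : ℝ) (hlam : 0 < lam0) (hα : 0 < α) (hC : 0 < C)
    (h : ℝ → ℝ) (hm : Measurable h) (hnn : ∀ τ, 0 ≤ h τ)
    (hzero : ∀ τ : ℝ, τ ≤ 0 → h τ = 0)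
    (hsmall : ∀ τ : ℝ, 0 < τ → τ < 1 → h τ ≤ C * Real.exp (-α / τ))
    (hcomp : ∀ δ : ℝ, 0 < δ → δ < 1 → ∃ Cδ : ℝ, 1 ≤ Cδ ∧ ∀ τ : ℝ, δ ≤ τ →
      Cδ⁻¹ * Real.exp (-lam0 * τ) ≤ h τ ∧ h τ ≤ Cδ * Real.exp (-lam0 * τ)) :
    ¬ ∃ ν : Measure ℝ, ν (Set.Ici 0) = 0 ∧
      ∀ t : ℝ, t < 0 →
        ENNReal.ofReal (Real.exp (-lam0 * t)) =
          ∫⁻ s, ENNReal.ofReal (h (t - s)) ∂ν := by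
  rintro ⟨ν, -, hν⟩
  obtain ⟨D, hD1, hD⟩ := hcomp (1/2) (by norm_num) (by norm_num)
  have hD0 : 0 < D := by linarith
  set f : ℝ → ENNReal := fun s => ENNReal.ofReal (Real.exp (lam0 * s)) with hf
  have hfm : Measurable f := by fun_prop
  set μ : Measure ℝ := ν.withDensity f with hμ
  have hμI : ∀ t : ℝ, μ (Set.Iic t) = ∫⁻ s, (Set.Iic t).indicator f s ∂ν := by
    intro t
    rw [hμ, withDensity_apply _ measurableSet_Iic, lintegral_indicator measurableSet_Iic]
  have him : ∀ t : ℝ, Measurable ((Set.Iic t).indicator f) :=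
    fun t => hfm.indicator measurableSet_Iic
  -- finiteness
  have hfin : μ (Set.Iic (-2)) ≠ ⊤ := by
    have hc : 0 < D⁻¹ * Real.exp lam0 := by positivity
    have h1 : ENNReal.ofReal (D⁻¹ * Real.exp lam0) * μ (Set.Iic (-2)) ≤
        ENNReal.ofReal (Real.exp (-lam0 * (-1))) := by
      rw [hν (-1) (by norm_num), hμI, ← lintegral_const_mul _ (him _)]
      refine lintegral_mono fun s => ?_
      by_cases hs : s ∈ Set.Iic (-2 : ℝ)
      · rw [Set.indicator_of_mem hs, hf, ← ENNReal.ofReal_mul hc.le]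
        refine ENNReal.ofReal_le_ofReal ?_
        have hs' : s ≤ -2 := hs
        refine le_trans (le_of_eq ?_) (hD (-1 - s) (by linarith)).1
        rw [mul_assoc, ← Real.exp_add]
        congr 2
        ring
      · rw [Set.indicator_of_notMem hs, mul_zero]
        exact zero_le
    intro htop
    rw [htop, ENNReal.mul_top (by simpa using hc)] at h1
    exact absurd h1 (by simp)
  -- upper bound
  obtain ⟨K, hK0, hK⟩ : ∃ K : ℝ, 0 < K ∧ ∀ τ : ℝ, h τ ≤ K * Real.exp (-lam0 * τ) := by
    refine ⟨max D (C * Real.exp lam0), lt_max_of_lt_left hD0, fun τ => ?_⟩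
    rcases le_or_gt τ 0 with h0 | h0
    · rw [hzero τ h0]
      have : 0 < max D (C * Real.exp lam0) := lt_max_of_lt_left hD0
      positivity
    rcases le_or_gt (1/2) τ with h2 | h2
    · exact (hD τ h2).2.trans (mul_le_mul_of_nonneg_right (le_max_left _ _) (Real.exp_pos _).le)
    · have h3 : h τ ≤ C * 1 := (hsmall τ h0 (by linarith)).trans
        (mul_le_mul_of_nonneg_left (Real.exp_le_one_iff.2
          (div_nonpos_of_nonpos_of_nonneg (by linarith) h0.le)) hC.le)
      refine h3.trans (le_trans ?_
        (mul_le_mul_of_nonneg_right (le_max_right _ _) (Real.exp_pos _).le))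
      rw [mul_assoc, ← Real.exp_add]
      exact mul_le_mul_of_nonneg_left (Real.one_le_exp (by nlinarith)) hC.le
  have hup : ∀ t : ℝ, t < 0 → 1 ≤ ENNReal.ofReal K * μ (Set.Iic t) := by
    intro t ht
    have h1 : ENNReal.ofReal (Real.exp (-lam0 * t)) ≤
        ENNReal.ofReal (K * Real.exp (-lam0 * t)) * μ (Set.Iic t) := by
      rw [hν t ht, hμI, ← lintegral_const_mul _ (him _)]
      refine lintegral_mono fun s => ?_
      by_cases hs : s ∈ Set.Iic t
      · rw [Set.indicator_of_mem hs, hf, ← ENNReal.ofReal_mul (by positivity)]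
        refine ENNReal.ofReal_le_ofReal ((hK (t - s)).trans (le_of_eq ?_))
        rw [mul_assoc, ← Real.exp_add]
        congr 2
        ring
      · have hs' : t < s := not_le.1 hs
        rw [hzero (t - s) (by linarith)]
        simp
    rw [mul_comm K, ENNReal.ofReal_mul (Real.exp_pos _).le, mul_assoc] at h1
    have hp : ENNReal.ofReal (Real.exp (-lam0 * t)) ≠ 0 := by
      simpa using Real.exp_pos _
    refine (ENNReal.mul_le_mul_iff_right hp ENNReal.ofReal_ne_top).1 ?_
    rwa [mul_one]
  have hlim : Filter.Tendsto (fun n : ℕ => μ (Set.Iic (-2 - (n : ℝ)))) Filter.atTop (nhds 0) := by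
    have h1 := tendsto_measure_iInter_atTop (μ := μ) (s := fun n : ℕ => Set.Iic (-2 - (n : ℝ)))
      (fun n => measurableSet_Iic.nullMeasurableSet)
      (fun m n hmn => Set.Iic_subset_Iic.2 (by
        have : (m : ℝ) ≤ n := by exact_mod_cast hmn
        linarith)) ⟨0, by simpa using hfin⟩
    have h2 : (⋂ n : ℕ, Set.Iic (-2 - (n : ℝ))) = ∅ := by
      ext x
      simp only [Set.mem_iInter, Set.mem_Iic, Set.mem_empty_iff_false, iff_false, not_forall,
        not_le]
      obtain ⟨n, hn⟩ := exists_nat_gt (-x)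
      exact ⟨n, by linarith⟩
    rwa [h2, measure_empty] at h1
  have hlim2 := ENNReal.Tendsto.const_mul (a := ENNReal.ofReal K) hlim
    (Or.inr ENNReal.ofReal_ne_top)
  rw [mul_zero] at hlim2
  have h01 : (1 : ENNReal) ≤ 0 := ge_of_tendsto' hlim2 fun n => hup _ (by
    have : (0 : ℝ) ≤ n := n.cast_nonneg
    linarith)
  simp at h01
end
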